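/- There exists a set Γ ⊆ ℕ of lower density one (i.e. liminf_{n→∞} #(Γ∩[1,n])/n = 1) such that the system E(ℕ∖Γ) = {e^{2πint} : n ∈ ℕ∖Γ} is complete in L²(𝕋, w) for some positive increasing weight w on (0,1) with ∫₀¹ log w(t) dt = −∞. -/

import Mathlib

open MeasureTheory Filter

noncomputable section

/-- The weighted measure `w(t) dt` on `(0,1)`. -/
def wMeasure (w : ℝ → ℝ) : Measure ℝ :=
  (volume.restrict (Set.Ioo (0:ℝ) 1)).withDensity (fun t => ENNReal.ofReal (w t))

/-- The exponential `e^{2πiλt}`. -/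
def expf (l : ℝ) : ℝ → ℂ := fun t => Complex.exp (2 * Real.pi * Complex.I * l * t)

/-- Finite linear combinations of the exponentials `e^{2πiλt}`, `λ ∈ S`, are dense in
`L²([0,1], w(t)dt)`. -/
def ExpSpans (w : ℝ → ℝ) (S : Set ℝ) : Prop :=
  closure ((Submodule.span ℂ
      {g : Lp ℂ 2 (wMeasure w) | ∃ l ∈ S, (g : ℝ → ℂ) =ᵐ[wMeasure w] expf l} :
        Submodule ℂ (Lp ℂ 2 (wMeasure w))) : Set (Lp ℂ 2 (wMeasure w))) = Set.univ

/-- `∫₀¹ log w(t) dt = -∞`: the positive part is finite and the negative part is infinite. -/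
def LogIntNegInf (w : ℝ → ℝ) : Prop :=
  (∫⁻ t in Set.Ioo (0:ℝ) 1, ENNReal.ofReal (Real.log (w t))) ≠ ⊤ ∧
  (∫⁻ t in Set.Ioo (0:ℝ) 1, ENNReal.ofReal (-(Real.log (w t)))) = ⊤

/-!
Fix `a < b` with `β = b - a < 1`. If `f ∈ L²(a, b)` is orthogonal to the exponentials with
frequencies `n`, then its Laplace transform `Φ(z) = ∫ f(t) exp(-2πz(t - a)) dt` vanishes at
`i n`. Here `exp(πβz) Φ(z)` is `O(exp(πβ|Re z|))`, with a smaller exponent than `sinh πz`. So if the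
zeros `i n` fill a block of length `2 ^ l`, the quotient by `sinh πz` is exponentially small on
the boundary of a square of comparable size, and the maximum principle makes `Φ` exponentially
small on the middle of that block of the imaginary axis. A Phragmén–Lindelöf argument carries
this smallness to the points of the positive axis whose distance from `0` is comparable to the
position of the block. If `Φ` vanishes on the blocks `[2 ^ (p + l), 2 ^ (p + l) + 2 ^ l)` for all
`l`, then `Φ(x) = O(exp(-cx))` with `c = c(β, p) > 0`, and `exp(cz) Φ(z)` satisfies the same
hypotheses as `Φ`. Iterating, `Φ` decays faster than every exponential, so `Φ = 0`.

Hence the frequencies in these blocks, a set of upper density at most `2 / 2 ^ p`, span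
`L²(a, b)`, and finitely many of them approximate any given exponential there. Enumerate the
integers as `u j` with infinite repetition, and approximate `exp(2πi(u j)t)` on `(1/(j+2), 1)` with
error tending to `0` by a trigonometric polynomial with frequencies in the blocks for `p = j`. The
frequencies used form a set of density zero, and a weight decaying fast enough at `0`, in
particular below `exp(-1/t)`, removes the errors on `(0, 1/(j+2))`.
-/

/-! ### Division by the zeros of sinh -/

theorem norm_sinh_sq (z : ℂ) : ‖Complex.sinh z‖ ^ 2 = Real.sinh z.re ^ 2 + Real.sin z.im ^ 2 := by
  conv_lhs => rw [← Complex.re_add_im z]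
  rw [Complex.sinh_add, Complex.cosh_mul_I, Complex.sinh_mul_I, ← Complex.ofReal_sinh,
    ← Complex.ofReal_cosh, ← Complex.ofReal_sin, ← Complex.ofReal_cos, ← mul_assoc,
    ← Complex.ofReal_mul, ← Complex.ofReal_mul, Complex.sq_norm, Complex.normSq_add_mul_I,
    mul_pow, mul_pow, Real.cosh_sq]
  linear_combination Real.sinh z.re ^ 2 * Real.sin_sq_add_cos_sq z.im

theorem exp_abs_re_le_norm_sinh {z : ℂ} (hz : 1 ≤ |z.re| ∨ Real.cos z.im = 0) :
    Real.exp |z.re| ≤ 4 * ‖Complex.sinh z‖ := by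
  refine (pow_le_pow_iff_left₀ (by positivity) (by positivity) two_ne_zero).1 ?_
  set E := Real.exp |z.re| with hE
  have hE1 : 1 ≤ E := Real.one_le_exp (abs_nonneg _)
  have hEi : E * E⁻¹ = 1 := mul_inv_cancel₀ (by positivity)
  have hEi0 : 0 < E⁻¹ := by positivity
  have hsinh : Real.sinh z.re ^ 2 = ((E - E⁻¹) / 2) ^ 2 := by
    rw [hE, ← Real.exp_neg, ← Real.sinh_eq, ← sq_abs, Real.abs_sinh]
  rw [mul_pow, norm_sinh_sq, hsinh]
  rcases hz with hre | hcos
  · have hE2 : 2 ≤ E := by linarith [Real.add_one_le_exp |z.re|]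
    nlinarith [sq_nonneg (Real.sin z.im)]
  · have hsin : Real.sin z.im ^ 2 = 1 := by simpa [hcos] using Real.sin_sq_add_cos_sq z.im
    nlinarith

theorem norm_sinh_le_one_of_re_eq_zero {z : ℂ} (hz : z.re = 0) : ‖Complex.sinh z‖ ≤ 1 := by
  rw [← sq_le_one_iff₀ (norm_nonneg _), norm_sinh_sq, hz]
  simpa using Real.sin_sq_le_one z.im

theorem exists_int_of_sinh_pi_mul_eq_zero {z : ℂ} (hz : Complex.sinh (Real.pi * z) = 0) :
    ∃ k : ℤ, z = k * Complex.I := by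
  have hsin : Complex.sin (Real.pi * z * Complex.I) = 0 := by rw [Complex.sin_mul_I, hz, zero_mul]
  obtain ⟨k, hk⟩ := Complex.sin_eq_zero_iff.1 hsin
  have hzI : z * Complex.I = k :=
    mul_left_cancel₀ (Complex.ofReal_ne_zero.2 Real.pi_ne_zero) (by linear_combination hk)
  exact ⟨-k, by push_cast; linear_combination -Complex.I * hzI + z * Complex.I_sq⟩

theorem exists_eq_mul_of_simple_zeros {U : Set ℂ} (hU : IsOpen U) {A D : ℂ → ℂ}
    (hA : DifferentiableOn ℂ A U) (hD : DifferentiableOn ℂ D U)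
    (hA0 : ∀ z ∈ U, D z = 0 → A z = 0) (hD' : ∀ z ∈ U, D z = 0 → deriv D z ≠ 0) :
    ∃ G : ℂ → ℂ, DifferentiableOn ℂ G U ∧ ∀ z ∈ U, A z = G z * D z := by
  classical
  refine ⟨fun z ↦ if D z = 0 then deriv A z / deriv D z else A z / D z, fun z hz ↦ ?_,
    fun z hz ↦ ?_⟩
  · have hUz : U ∈ nhds z := hU.mem_nhds hz
    refine DifferentiableAt.differentiableWithinAt ?_
    by_cases hDz : D z = 0
    · have hdA := ((Complex.differentiableOn_dslope hUz).2 hA).differentiableAt hUz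
      have hdD := ((Complex.differentiableOn_dslope hUz).2 hD).differentiableAt hUz
      have hne : dslope D z z ≠ 0 := by simpa only [dslope_same] using hD' z hz hDz
      refine (hdA.div hdD hne).congr_of_eventuallyEq ?_
      filter_upwards [hdD.continuousAt.eventually_ne hne] with u hu
      rcases eq_or_ne u z with rfl | huz
      · simp [hDz]
      · have huz' := sub_ne_zero.2 huz
        have hAu : A u = (u - z) * dslope A z u := by
          simpa [hA0 z hz hDz] using (sub_smul_dslope A z u).symm
        have hDu : D u = (u - z) * dslope D z u := by
          simpa [hDz] using (sub_smul_dslope D z u).symm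
        rw [if_neg (hDu ▸ mul_ne_zero huz' hu), hAu, hDu, Pi.div_apply, mul_div_mul_left _ _ huz']
    · refine ((hA.differentiableAt hUz).div (hD.differentiableAt hUz) hDz).congr_of_eventuallyEq ?_
      filter_upwards [(hD.differentiableAt hUz).continuousAt.eventually_ne hDz] with u hu
      simp [hu]
  · by_cases hDz : D z = 0
    · simp [hDz, hA0 z hz hDz]
    · simp [hDz]

/-- The open square with centre `0` and side `2R`, where the maximum principle is applied. -/
def openSquare (R : ℝ) : Set ℂ := Set.Ioo (-R) R ×ℂ Set.Ioo (-R) R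

theorem mem_frontier_openSquare {R : ℝ} (hR : 0 < R) {u : ℂ}
    (hu : u ∈ frontier (openSquare R)) :
    |u.re| ≤ R ∧ |u.im| ≤ R ∧ (|u.re| = R ∨ |u.im| = R) := by
  rw [openSquare, Complex.frontier_reProdIm, closure_Ioo (by linarith),
    frontier_Ioo (by linarith)] at hu
  rcases hu with ⟨hre, him⟩ | ⟨hre, him⟩
  · have him' : |u.im| = R := (abs_eq hR.le).2 him.symm
    exact ⟨abs_le.2 hre, him'.le, .inr him'⟩
  · have hre' : |u.re| = R := (abs_eq hR.le).2 hre.symm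
    exact ⟨hre'.le, abs_le.2 him, .inl hre'⟩

theorem mul_I_mem_closure_openSquare {R y : ℝ} (hR : 0 < R) (hy : |y| ≤ R) :
    (y * Complex.I : ℂ) ∈ closure (openSquare R) := by
  rw [openSquare, Complex.closure_reProdIm, closure_Ioo (by linarith), Complex.mem_reProdIm]
  simpa [hR.le] using abs_le.1 hy

theorem norm_le_exp_of_forall_mem_frontier_openSquare {G : ℂ → ℂ} {M κ R y : ℝ} (hκ : 0 ≤ κ)
    (hR : 0 < R) (hG : DiffContOnCl ℂ G (openSquare R))
    (hGM : ∀ u ∈ frontier (openSquare R),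
      ‖G u‖ ≤ M * Real.exp (-(κ * |u.re|)))
    (hy : |y| ≤ R) :
    ‖G (y * Complex.I)‖ ≤ M * Real.exp (-(κ * ((R ^ 2 - y ^ 2) / (2 * R)))) := by
  -- The real part of `(R² + u²) / (2R)` is at most `|u.re|` on the boundary of the square.
  let h : ℂ → ℂ := fun u ↦ κ * ((R ^ 2 + u ^ 2) / (2 * R))
  have hre (u : ℂ) : (h u).re = κ * ((R ^ 2 + u.re ^ 2 - u.im ^ 2) / (2 * R)) := by
    have hcast : h u = (κ / (2 * R) : ℝ) * (((R ^ 2 : ℝ) : ℂ) + u ^ 2) := by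
      simp only [h]; push_cast; ring
    rw [hcast, Complex.re_ofReal_mul, Complex.add_re, Complex.ofReal_re, pow_two u, Complex.mul_re]
    ring
  have hbound : ∀ u ∈ frontier (openSquare R),
      ‖G u * Complex.exp (h u)‖ ≤ M := by
    intro u hu
    obtain ⟨hre_le, him_le, hedge⟩ := mem_frontier_openSquare hR hu
    have hquad : (R ^ 2 + u.re ^ 2 - u.im ^ 2) / (2 * R) ≤ |u.re| := by
      rw [div_le_iff₀ (by positivity), ← sq_abs u.re, ← sq_abs u.im]
      rcases hedge with h | h <;> rw [h] <;>
        nlinarith [abs_nonneg u.re, abs_nonneg u.im, hre_le, him_le]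
    calc ‖G u * Complex.exp (h u)‖
        ≤ M * Real.exp (-(κ * |u.re|)) * Real.exp (κ * |u.re|) := by
          rw [norm_mul, Complex.norm_exp, hre]
          gcongr
          · exact (norm_nonneg _).trans (hGM u hu)
          · exact hGM u hu
      _ = M := by rw [mul_assoc, ← Real.exp_add, neg_add_cancel, Real.exp_zero, mul_one]
  have hdiff : Differentiable ℂ fun u ↦ Complex.exp (h u) := by fun_prop
  have hmax := Complex.norm_le_of_forall_mem_frontier_norm_le
    ((Metric.isBounded_Ioo _ _).reProdIm (Metric.isBounded_Ioo _ _))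
    (hG.smul hdiff.diffContOnCl) hbound (mul_I_mem_closure_openSquare hR hy)
  rw [norm_smul, Complex.norm_exp, hre] at hmax
  rw [Real.exp_neg, ← div_eq_mul_inv, le_div_iff₀ (Real.exp_pos _)]
  simpa using hmax

theorem exists_eq_mul_sinh_pi {A : ℂ → ℂ} (hA : Differentiable ℂ A) {N : ℕ}
    (hzero : ∀ k : ℤ, |k| < N → A (k * Complex.I) = 0) :
    ∃ G : ℂ → ℂ, DifferentiableOn ℂ G {z | |z.im| < N} ∧
      ∀ z : ℂ, |z.im| < N → A z = G z * Complex.sinh (Real.pi * z) := by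
  have hopen : IsOpen {z : ℂ | |z.im| < N} :=
    isOpen_lt (continuous_abs.comp Complex.continuous_im) continuous_const
  refine exists_eq_mul_of_simple_zeros hopen hA.differentiableOn (by fun_prop)
    (fun z hz hsinh ↦ ?_) fun z _ hsinh ↦ ?_
  · obtain ⟨k, rfl⟩ := exists_int_of_sinh_pi_mul_eq_zero hsinh
    refine hzero k ?_
    have him : |(k : ℝ)| < N := by simpa using hz
    exact_mod_cast him
  · have hderiv : HasDerivAt (fun z : ℂ ↦ Complex.sinh (Real.pi * z))
        (Complex.cosh (Real.pi * z) * (Real.pi * 1)) z := ((hasDerivAt_id z).const_mul _).csinh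
    have hcosh : Complex.cosh (Real.pi * z) ≠ 0 := fun h ↦ by
      simpa [h, hsinh] using Complex.cosh_sq (Real.pi * z)
    simpa [hderiv.deriv, Real.pi_ne_zero] using hcosh

theorem exp_pi_mul_abs_re_le_norm_sinh {N : ℕ} (hN : 1 ≤ N) {u : ℂ}
    (hu : u ∈ frontier (openSquare (N - 1 / 2))) :
    Real.exp (Real.pi * |u.re|) ≤ 4 * ‖Complex.sinh (Real.pi * u)‖ := by
  have hN' : (1 : ℝ) ≤ N := mod_cast hN
  have hre : Real.pi * |u.re| = |(Real.pi * u : ℂ).re| := by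
    rw [Complex.re_ofReal_mul, abs_mul, abs_of_pos Real.pi_pos]
  rw [hre]
  refine exp_abs_re_le_norm_sinh ?_
  obtain ⟨-, -, hedge | hedge⟩ := mem_frontier_openSquare (by linarith) hu
  · left
    rw [← hre, hedge]
    nlinarith [Real.pi_gt_three]
  · right
    rw [Complex.im_ofReal_mul, ← Real.cos_abs, abs_mul, abs_of_pos Real.pi_pos, hedge,
      Real.cos_eq_zero_iff]
    exact ⟨N - 1, by push_cast; ring⟩

/-- Entire functions obeying the growth bound of the Laplace transform
`z ↦ ∫ f(t) e^{-2πzt} dt` of a function `f` on `[0, β]` with `‖f‖₁ ≤ C`. -/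
structure IsLaplaceType (C β : ℝ) (Φ : ℂ → ℂ) : Prop where
  differentiable : Differentiable ℂ Φ
  norm_le (z : ℂ) : ‖Φ z‖ ≤ C * Real.exp (2 * Real.pi * β * max 0 (-z.re))

namespace IsLaplaceType

variable {C β : ℝ} {Φ : ℂ → ℂ}

theorem norm_le_of_re_nonneg (hΦ : IsLaplaceType C β Φ) {z : ℂ} (hz : 0 ≤ z.re) : ‖Φ z‖ ≤ C := by
  simpa [hz] using hΦ.norm_le z

theorem nonneg (hΦ : IsLaplaceType C β Φ) : 0 ≤ C :=
  (norm_nonneg _).trans (hΦ.norm_le_of_re_nonneg (z := 0) le_rfl)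

theorem comp_add_mul_I (hΦ : IsLaplaceType C β Φ) (y : ℝ) :
    IsLaplaceType C β fun z ↦ Φ (z + y * Complex.I) where
  differentiable := hΦ.differentiable.comp (by fun_prop)
  norm_le z := by simpa using hΦ.norm_le (z + y * Complex.I)

theorem norm_mul_exp_le (hΦ : IsLaplaceType C β Φ) (z : ℂ) :
    ‖Φ z * Complex.exp (Real.pi * β * z)‖ ≤ C * Real.exp (Real.pi * β * |z.re|) := by
  have hre : (Real.pi * β * z : ℂ).re = Real.pi * β * z.re := by
    rw [← Complex.ofReal_mul, Complex.re_ofReal_mul]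
  calc ‖Φ z * Complex.exp (Real.pi * β * z)‖
      ≤ C * Real.exp (2 * Real.pi * β * max 0 (-z.re)) * Real.exp (Real.pi * β * z.re) := by
        rw [norm_mul, Complex.norm_exp, hre]
        gcongr
        exact hΦ.norm_le z
    _ = C * Real.exp (Real.pi * β * |z.re|) := by
        rw [mul_assoc, ← Real.exp_add]
        congr 2
        rcases le_total 0 z.re with h | h
        · rw [max_eq_left (by linarith), abs_of_nonneg h]; ring
        · rw [max_eq_right (by linarith), abs_of_nonpos h]; ring

theorem exists_quotient_sinh (hΦ : IsLaplaceType C β Φ) {N : ℕ} (hN : 1 ≤ N)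
    (hzero : ∀ k : ℤ, |k| < N → Φ (k * Complex.I) = 0) :
    ∃ G : ℂ → ℂ, DiffContOnCl ℂ G (openSquare (N - 1 / 2)) ∧
      (∀ z : ℂ, |z.im| < N →
        Φ z * Complex.exp (Real.pi * β * z) = G z * Complex.sinh (Real.pi * z)) ∧
      ∀ u ∈ frontier (openSquare (N - 1 / 2)),
        ‖G u‖ ≤ 4 * C * Real.exp (-(Real.pi * (1 - β) * |u.re|)) := by
  obtain ⟨G, hG, hGmul⟩ := exists_eq_mul_sinh_pi (N := N)
    (A := fun z ↦ Φ z * Complex.exp (Real.pi * β * z))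
    (hΦ.differentiable.mul (by fun_prop)) fun k hk ↦ by simp [hzero k hk]
  have hN' : (1 : ℝ) ≤ N := mod_cast hN
  have hclosure : closure (openSquare (N - 1 / 2)) ⊆ {z | |z.im| < N} := by
    rw [openSquare, Complex.closure_reProdIm, closure_Ioo (by linarith)]
    exact fun z hz ↦ (abs_le.2 hz.2).trans_lt (by linarith)
  refine ⟨G, (hG.mono hclosure).diffContOnCl, hGmul, fun u hu ↦ ?_⟩
  have hexp : Real.exp (-(Real.pi * (1 - β) * |u.re|)) =
      Real.exp (Real.pi * β * |u.re|) / Real.exp (Real.pi * |u.re|) := by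
    rw [← Real.exp_sub]; ring_nf
  rw [hexp, ← mul_div_assoc, le_div_iff₀ (Real.exp_pos _)]
  calc ‖G u‖ * Real.exp (Real.pi * |u.re|)
      ≤ ‖G u‖ * (4 * ‖Complex.sinh (Real.pi * u)‖) := by
        gcongr; exact exp_pi_mul_abs_re_le_norm_sinh hN hu
    _ = 4 * ‖Φ u * Complex.exp (Real.pi * β * u)‖ := by
        rw [hGmul u (hclosure (frontier_subset_closure hu)), norm_mul]; ring
    _ ≤ 4 * C * Real.exp (Real.pi * β * |u.re|) := by linarith [hΦ.norm_mul_exp_le u]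

theorem norm_mul_I_le_of_zeros (hΦ : IsLaplaceType C β Φ) (hβ : β ≤ 1) {N : ℕ} (hN : 1 ≤ N)
    (hzero : ∀ k : ℤ, |k| < N → Φ (k * Complex.I) = 0) {y : ℝ} (hy : |y| ≤ (N - 1 / 2 : ℝ) / 2) :
    ‖Φ (y * Complex.I)‖ ≤ 4 * C * Real.exp (-((1 - β) * (N - 1 / 2 : ℝ))) := by
  obtain ⟨G, hG, hGmul, hGfront⟩ := hΦ.exists_quotient_sinh hN hzero
  have hN' : (1 : ℝ) ≤ N := mod_cast hN
  set R : ℝ := N - 1 / 2 with hR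
  have hR0 : 0 < R := by linarith
  have hyR : |y| ≤ R := by linarith
  have hyN : |(y * Complex.I : ℂ).im| < N := by simpa using hyR.trans_lt (by linarith)
  have hκ : 0 ≤ Real.pi * (1 - β) := mul_nonneg Real.pi_pos.le (by linarith)
  have hrate : (1 - β) * R ≤ Real.pi * (1 - β) * ((R ^ 2 - y ^ 2) / (2 * R)) := by
    have hy2 : y ^ 2 ≤ (R / 2) ^ 2 := sq_le_sq.2 (hy.trans (le_abs_self _))
    have hquad : 3 / 8 * R ≤ (R ^ 2 - y ^ 2) / (2 * R) := by
      rw [le_div_iff₀ (by positivity)]; nlinarith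
    nlinarith [Real.pi_gt_three, mul_le_mul_of_nonneg_left hquad hκ,
      mul_nonneg (sub_nonneg.2 hβ) hR0.le]
  calc ‖Φ (y * Complex.I)‖ = ‖Φ (y * Complex.I) * Complex.exp (Real.pi * β * (y * Complex.I))‖ := by
        rw [norm_mul, Complex.norm_exp]; simp
    _ ≤ ‖G (y * Complex.I)‖ * 1 := by
        rw [hGmul _ hyN, norm_mul]
        gcongr
        exact norm_sinh_le_one_of_re_eq_zero (by simp)
    _ ≤ 4 * C * Real.exp (-(Real.pi * (1 - β) * ((R ^ 2 - y ^ 2) / (2 * R)))) := by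
        rw [mul_one]
        exact norm_le_exp_of_forall_mem_frontier_openSquare hκ hR0 hG hGfront hyR
    _ ≤ 4 * C * Real.exp (-((1 - β) * R)) := by
        have := hΦ.nonneg
        gcongr

end IsLaplaceType

/-! ### Phragmén–Lindelöf estimates -/

/-- The barrier `(z + s)⁻¹ - ½ (z + 4s)⁻¹`: its real part is at most `s⁻¹` on the right half-plane,
nonpositive on the imaginary axis away from the origin, and positive in the sector
`|im z| ≤ re z`. -/
def barrier (s : ℝ) (z : ℂ) : ℂ := (z + s)⁻¹ - (1 / 2 : ℝ) * (z + (4 * s : ℝ))⁻¹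

theorem barrier_re (s : ℝ) (z : ℂ) :
    (barrier s z).re = (z.re + s) / ((z.re + s) ^ 2 + z.im ^ 2) -
      (z.re + 4 * s) / (2 * ((z.re + 4 * s) ^ 2 + z.im ^ 2)) := by
  rw [barrier, Complex.sub_re, Complex.re_ofReal_mul, Complex.inv_re, Complex.inv_re,
    Complex.normSq_apply, Complex.normSq_apply, div_mul_div_comm, one_mul]
  simp [pow_two]

theorem differentiableAt_barrier {s : ℝ} (hs : 0 < s) {z : ℂ} (hz : 0 ≤ z.re) :
    DifferentiableAt ℂ (barrier s) z := by
  have hdiff : ∀ r : ℝ, 0 < r → DifferentiableAt ℂ (fun z : ℂ ↦ (z + r)⁻¹) z := fun r hr ↦ by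
    refine (differentiableAt_id.add_const _).fun_inv fun h ↦ ?_
    have := congrArg Complex.re h
    simp only [Complex.add_re, Complex.ofReal_re, Complex.zero_re] at this
    linarith
  exact (hdiff s hs).sub ((hdiff (4 * s) (by positivity)).const_mul _)

theorem barrier_re_le_inv {s : ℝ} (hs : 0 < s) {z : ℂ} (hz : 0 ≤ z.re) :
    (barrier s z).re ≤ s⁻¹ := by
  rw [barrier_re]
  have hsub : 0 ≤ (z.re + 4 * s) / (2 * ((z.re + 4 * s) ^ 2 + z.im ^ 2)) := by positivity
  have hmain : (z.re + s) / ((z.re + s) ^ 2 + z.im ^ 2) ≤ s⁻¹ := by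
    rw [inv_eq_one_div, div_le_div_iff₀ (by positivity) hs]
    nlinarith [sq_nonneg z.im]
  linarith

theorem barrier_mul_I_re_nonpos {s y : ℝ} (hs : 0 < s) (hy : 4 * s ≤ |y|) :
    (barrier s (y * Complex.I)).re ≤ 0 := by
  have hy2 : (4 * s) ^ 2 ≤ y ^ 2 := sq_le_sq.2 (by rwa [abs_of_pos (by positivity : 0 < 4 * s)])
  rw [barrier_re, sub_nonpos]
  simp only [Complex.I_re, Complex.re_ofReal_mul, mul_zero, zero_add, Complex.im_ofReal_mul,
    Complex.I_im, mul_one]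
  rw [div_le_div_iff₀ (by positivity) (by positivity)]
  nlinarith

theorem le_barrier_re {s : ℝ} (hs : 0 < s) {z : ℂ} (hsz : s ≤ z.re) (hz : |z.im| ≤ z.re) :
    1 / (10 * z.re) ≤ (barrier s z).re := by
  have hz0 : 0 < z.re := hs.trans_le hsz
  have him : z.im ^ 2 ≤ z.re ^ 2 := sq_le_sq.2 (hz.trans (le_abs_self _))
  have hmain : 1 / (5 * z.re) ≤ (z.re + s) / ((z.re + s) ^ 2 + z.im ^ 2) := by
    rw [div_le_div_iff₀ (by positivity) (by positivity)]
    nlinarith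
  have hmono : (z.re + 4 * s) / ((z.re + 4 * s) ^ 2 + z.im ^ 2) ≤
      (z.re + s) / ((z.re + s) ^ 2 + z.im ^ 2) := by
    have hprod : z.im ^ 2 ≤ (z.re + s) * (z.re + 4 * s) := by nlinarith
    rw [div_le_div_iff₀ (by positivity) (by positivity)]
    nlinarith [mul_nonneg hs.le (sub_nonneg.2 hprod)]
  calc 1 / (10 * z.re) = 1 / (5 * z.re) / 2 := by ring
    _ ≤ (z.re + s) / ((z.re + s) ^ 2 + z.im ^ 2) -
          (z.re + 4 * s) / ((z.re + 4 * s) ^ 2 + z.im ^ 2) / 2 := by linarith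
    _ = (barrier s z).re := by rw [barrier_re, div_div, mul_comm 2]

theorem norm_le_of_bounded_on_imaginary_axis {f : ℂ → ℂ} {C M : ℝ}
    (hf : DiffContOnCl ℂ f {z | 0 < z.re}) (hM : ∀ z : ℂ, 0 ≤ z.re → ‖f z‖ ≤ M)
    (him : ∀ y : ℝ, ‖f (y * Complex.I)‖ ≤ C) {z : ℂ} (hz : 0 ≤ z.re) : ‖f z‖ ≤ C := by
  refine PhragmenLindelof.right_half_plane_of_bounded_on_real hf ⟨1, one_lt_two, 0, ?_⟩
    (isBoundedUnder_of_eventually_le (a := M) ?_) him hz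
  · refine Asymptotics.IsBigO.of_bound M (eventually_inf_principal.2 (.of_forall fun u hu ↦ ?_))
    simpa using hM u hu.le
  · filter_upwards [eventually_ge_atTop 0] with x hx using hM x (by simpa using hx)

theorem norm_mul_exp_barrier_mul_I_le {f : ℂ → ℂ} {C κ R : ℝ} (hκ : 0 < κ) (hR : 0 < R)
    (hκR : 4 ≤ κ * R) (hC : ∀ y : ℝ, ‖f (y * Complex.I)‖ ≤ C)
    (hsmall : ∀ y : ℝ, |y| ≤ R / 2 → ‖f (y * Complex.I)‖ ≤ 4 * C * Real.exp (-(κ * R))) (y : ℝ) :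
    ‖f (y * Complex.I)‖ *
      Real.exp (κ * R ^ 2 / 16 * (barrier (R / 8) (y * Complex.I)).re) ≤ C := by
  have hC0 : 0 ≤ C := (norm_nonneg _).trans (hC 0)
  have hR8 : 0 < R / 8 := by positivity
  rcases le_total |y| (R / 2) with hy | hy
  · have hmax : κ * R ^ 2 / 16 * (R / 8)⁻¹ = κ * R / 2 := by field_simp; norm_num
    calc ‖f (y * Complex.I)‖ * Real.exp (κ * R ^ 2 / 16 * (barrier (R / 8) (y * Complex.I)).re)
        ≤ 4 * C * Real.exp (-(κ * R)) * Real.exp (κ * R ^ 2 / 16 * (R / 8)⁻¹) := by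
          gcongr
          exacts [hsmall y hy, barrier_re_le_inv hR8 (by simp)]
      _ = C * (4 / Real.exp (κ * R / 2)) := by
          rw [hmax, mul_assoc, ← Real.exp_add,
            (by ring : -(κ * R) + κ * R / 2 = -(κ * R / 2)), Real.exp_neg]
          ring
      _ ≤ C := mul_le_of_le_one_right hC0 ((div_le_one (Real.exp_pos _)).2 (by
          nlinarith [Real.quadratic_le_exp_of_nonneg (by positivity : 0 ≤ κ * R / 2)]))
  · have hle := Real.exp_le_one_iff.2 (mul_nonpos_of_nonneg_of_nonpos
      (by positivity : 0 ≤ κ * R ^ 2 / 16)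
      (barrier_mul_I_re_nonpos hR8 (by linarith : 4 * (R / 8) ≤ |y|)))
    exact (mul_le_of_le_one_right (norm_nonneg _) hle).trans (hC y)

theorem norm_le_exp_neg_of_small_on_segment {f : ℂ → ℂ} {C κ R : ℝ}
    (hf : DiffContOnCl ℂ f {z | 0 < z.re}) (hC : ∀ z : ℂ, 0 ≤ z.re → ‖f z‖ ≤ C)
    (hκ : 0 < κ) (hR : 0 < R) (hκR : 4 ≤ κ * R)
    (hsmall : ∀ y : ℝ, |y| ≤ R / 2 → ‖f (y * Complex.I)‖ ≤ 4 * C * Real.exp (-(κ * R)))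
    {z : ℂ} (hzR : R / 8 ≤ z.re) (hz : |z.im| ≤ z.re) :
    ‖f z‖ ≤ C * Real.exp (-(κ * R ^ 2 / (160 * z.re))) := by
  have hC0 : 0 ≤ C := (norm_nonneg _).trans (hC 0 le_rfl)
  have hR8 : 0 < R / 8 := by positivity
  have hz0 : 0 < z.re := hR8.trans_le hzR
  set γ := κ * R ^ 2 / 16 with hγ
  have hγ0 : 0 ≤ γ := by positivity
  let F : ℂ → ℂ := fun u ↦ f u * Complex.exp (γ * barrier (R / 8) u)
  have hF (u : ℂ) : ‖F u‖ = ‖f u‖ * Real.exp (γ * (barrier (R / 8) u).re) := by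
    rw [norm_mul, Complex.norm_exp, Complex.re_ofReal_mul]
  have hFdiff : DiffContOnCl ℂ F {u | 0 < u.re} := by
    refine hf.smul (DifferentiableOn.diffContOnCl fun u hu ↦ ?_)
    rw [Complex.closure_setOfPred_lt_re] at hu
    exact ((differentiableAt_barrier hR8 hu).const_mul _).cexp.differentiableWithinAt
  have hFbound (u : ℂ) (hu : 0 ≤ u.re) : ‖F u‖ ≤ C * Real.exp (γ * (R / 8)⁻¹) := by
    rw [hF]
    gcongr
    exacts [hC u hu, barrier_re_le_inv hR8 hu]
  have hFim (y : ℝ) : ‖F (y * Complex.I)‖ ≤ C := by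
    rw [hF]
    exact norm_mul_exp_barrier_mul_I_le hκ hR hκR (fun y ↦ hC _ (by simp)) hsmall y
  have hFz := norm_le_of_bounded_on_imaginary_axis hFdiff hFbound hFim hz0.le
  have hrate : κ * R ^ 2 / (160 * z.re) ≤ γ * (barrier (R / 8) z).re := by
    refine le_of_eq_of_le ?_ (mul_le_mul_of_nonneg_left (le_barrier_re hR8 hzR hz) hγ0)
    rw [hγ]; field_simp; norm_num
  rw [hF, ← le_div_iff₀ (Real.exp_pos _), div_eq_mul_inv, ← Real.exp_neg] at hFz
  exact hFz.trans (by gcongr)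

theorem norm_mul_exp_le_of_decay_on_real {f : ℂ → ℂ} {C c : ℝ}
    (hf : DiffContOnCl ℂ f {z | 0 < z.re}) (hC : ∀ z : ℂ, 0 ≤ z.re → ‖f z‖ ≤ C)
    (hdecay : ∀ᶠ x : ℝ in atTop, ‖f x‖ ≤ C * Real.exp (-(c * x))) {z : ℂ} (hz : 0 ≤ z.re) :
    ‖f z * Complex.exp (c * z)‖ ≤ C := by
  have hnorm (u : ℂ) : ‖f u * Complex.exp (c * u)‖ = ‖f u‖ * Real.exp (c * u.re) := by
    rw [norm_mul, Complex.norm_exp, Complex.re_ofReal_mul]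
  have hdiff : Differentiable ℂ fun u : ℂ ↦ Complex.exp (c * u) := by fun_prop
  refine PhragmenLindelof.right_half_plane_of_bounded_on_real
    (f := fun u ↦ f u * Complex.exp (c * u)) (hf.smul hdiff.diffContOnCl)
    ⟨1, one_lt_two, |c|, ?_⟩ (isBoundedUnder_of_eventually_le (a := C) ?_) (fun y ↦ ?_) hz
  · refine Asymptotics.IsBigO.of_bound C (eventually_inf_principal.2 (.of_forall fun u hu ↦ ?_))
    rw [hnorm, Real.rpow_one, Real.norm_of_nonneg (Real.exp_pos _).le]
    have hexp : c * u.re ≤ |c| * ‖u‖ := (le_abs_self _).trans (by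
      rw [abs_mul]; gcongr; exact Complex.abs_re_le_norm u)
    have hCu := hC u (le_of_lt hu)
    gcongr
    exact (norm_nonneg _).trans hCu
  · filter_upwards [hdecay] with x hx
    rw [hnorm, Complex.ofReal_re]
    rwa [Real.exp_neg, ← div_eq_mul_inv, le_div_iff₀ (Real.exp_pos _)] at hx
  · rw [hnorm]
    simpa using hC (y * Complex.I) (by simp)

/-! ### Zeros on dyadic blocks -/

/-- The integers in the dyadic blocks `[2 ^ (p + l), 2 ^ (p + l) + 2 ^ l)`, which have relative
length `2⁻ᵖ`. -/
def dyadicBlocks (p : ℕ) : Set ℕ := ⋃ l, Set.Ico (2 ^ (p + l)) (2 ^ (p + l) + 2 ^ l)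

theorem exists_mem_dyadicBlocks_eq_add (p l : ℕ) {j : ℤ} (hj : |j| < 2 ^ l) :
    ∃ n ∈ dyadicBlocks p, (n : ℤ) = 2 ^ (p + l + 1) + 2 ^ l + j := by
  obtain ⟨hj1, hj2⟩ := abs_lt.1 hj
  have hpow : (2 : ℤ) ^ (l + 1) = 2 * 2 ^ l := pow_succ' 2 l
  have hpos : (0 : ℤ) < 2 ^ (p + l + 1) := by positivity
  obtain ⟨n, hn⟩ := Int.eq_ofNat_of_zero_le (a := 2 ^ (p + l + 1) + 2 ^ l + j) (by linarith)
  refine ⟨n, Set.mem_iUnion.2 ⟨l + 1, ?_, ?_⟩, hn.symm⟩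
  · zify [← add_assoc]; linarith
  · zify [← add_assoc]; linarith

/-- The exponential decay rate on the positive axis forced by zeros at `i n`, `n ∈ dyadicBlocks p`,
on functions of Laplace type `β`. -/
def decayRate (β : ℝ) (p : ℕ) : ℝ := (1 - β) / (160 * (16 * 2 ^ p) ^ 2)

theorem decayRate_pos {β : ℝ} (hβ : β < 1) (p : ℕ) : 0 < decayRate β p :=
  div_pos (sub_pos.2 hβ) (by positivity)

theorem decayRate_mul_le {β x R : ℝ} (hβ : β ≤ 1) {p : ℕ} (hx : 0 < x) (hxR : x ≤ 16 * 2 ^ p * R) :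
    decayRate β p * x ≤ (1 - β) * R ^ 2 / (160 * x) := by
  have := sub_nonneg.2 hβ
  rw [decayRate, div_mul_eq_mul_div, div_le_div_iff₀ (by positivity) (by positivity)]
  calc (1 - β) * x * (160 * x) = 160 * (1 - β) * x ^ 2 := by ring
    _ ≤ 160 * (1 - β) * (16 * 2 ^ p * R) ^ 2 := by gcongr
    _ = (1 - β) * R ^ 2 * (160 * (16 * 2 ^ p) ^ 2) := by ring

namespace IsLaplaceType

variable {C β : ℝ} {Φ : ℂ → ℂ} {p : ℕ}

theorem norm_ofReal_le_of_zeros (hΦ : IsLaplaceType C β Φ) (hβ : β < 1)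
    (hzero : ∀ n ∈ dyadicBlocks p, Φ (n * Complex.I) = 0) {l : ℕ} (hl : 8 ≤ (1 - β) * 2 ^ l)
    {x : ℝ} (hlx : 4 * 2 ^ p * 2 ^ l ≤ x) (hxl : x ≤ 8 * 2 ^ p * 2 ^ l) :
    ‖Φ x‖ ≤ C * Real.exp (-(decayRate β p * x)) := by
  have hp : (1 : ℝ) ≤ 2 ^ p := one_le_pow₀ one_le_two
  have hl1 : (1 : ℝ) ≤ 2 ^ l := one_le_pow₀ one_le_two
  have hpl : (2 : ℝ) ^ l ≤ 2 ^ p * 2 ^ l := le_mul_of_one_le_left (by positivity) hp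
  have hx0 : 0 < x := by linarith
  let m : ℝ := 2 ^ (p + l + 1) + 2 ^ l
  have hmx : m ≤ x := by
    have : m = 2 * (2 ^ p * 2 ^ l) + 2 ^ l := by simp only [m]; ring
    linarith
  have hΨ := hΦ.comp_add_mul_I m
  have hΨzero (j : ℤ) (hj : |j| < (2 ^ l : ℕ)) : Φ (j * Complex.I + m * Complex.I) = 0 := by
    obtain ⟨n, hn, hnj⟩ := exists_mem_dyadicBlocks_eq_add p l (mod_cast hj)
    have hnj' : (n : ℂ) = 2 ^ (p + l + 1) + 2 ^ l + j := mod_cast hnj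
    rw [← hzero n hn, hnj']
    simp only [m]; push_cast; ring_nf
  have hsmall (y : ℝ) (hy : |y| ≤ ((2 ^ l : ℕ) - 1 / 2 : ℝ) / 2) :=
    hΨ.norm_mul_I_le_of_zeros hβ.le Nat.one_le_two_pow hΨzero hy
  push_cast at hsmall
  have hcomp := norm_le_exp_neg_of_small_on_segment hΨ.differentiable.diffContOnCl
    (fun z hz ↦ hΨ.norm_le_of_re_nonneg hz) (sub_pos.2 hβ) (by linarith : (0 : ℝ) < 2 ^ l - 1 / 2)
    (by nlinarith) hsmall (z := x - m * Complex.I)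
    (by simp; linarith) (by simpa [abs_of_pos (by positivity : 0 < m)] using hmx)
  rw [sub_add_cancel] at hcomp
  refine hcomp.trans ?_
  have := hΦ.nonneg
  gcongr
  simpa using decayRate_mul_le hβ.le hx0 (by nlinarith : x ≤ 16 * 2 ^ p * (2 ^ l - 1 / 2))

theorem eventually_norm_ofReal_le_of_zeros (hΦ : IsLaplaceType C β Φ) (hβ : β < 1)
    (hzero : ∀ n ∈ dyadicBlocks p, Φ (n * Complex.I) = 0) :
    ∀ᶠ x : ℝ in atTop, ‖Φ x‖ ≤ C * Real.exp (-(decayRate β p * x)) := by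
  have hβ' : 0 < 1 - β := sub_pos.2 hβ
  obtain ⟨k, hk⟩ := pow_unbounded_of_one_lt (8 / (1 - β)) (one_lt_two : (1 : ℝ) < 2)
  rw [div_lt_iff₀' hβ'] at hk
  filter_upwards [eventually_ge_atTop (2 ^ (p + k + 2))] with x hx
  obtain ⟨n, hnx, hxn⟩ := exists_nat_pow_near ((one_le_pow₀ one_le_two).trans hx)
    (one_lt_two : (1 : ℝ) < 2)
  have hn : p + k + 2 < n + 1 :=
    (pow_lt_pow_iff_right₀ (one_lt_two : (1 : ℝ) < 2)).1 (hx.trans_lt hxn)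
  obtain ⟨l, rfl⟩ : ∃ l, n = p + l + 2 := ⟨n - (p + 2), by omega⟩
  refine hΦ.norm_ofReal_le_of_zeros (l := l) hβ hzero (hk.le.trans ?_)
    (le_of_eq_of_le ?_ hnx) (hxn.le.trans_eq ?_)
  · gcongr
    exacts [one_le_two, by omega]
  · ring
  · ring

theorem mul_exp_of_zeros (hΦ : IsLaplaceType C β Φ) (hβ : β < 1)
    (hzero : ∀ n ∈ dyadicBlocks p, Φ (n * Complex.I) = 0) :
    IsLaplaceType C β fun z ↦ Φ z * Complex.exp (decayRate β p * z) where
  differentiable := hΦ.differentiable.mul (by fun_prop)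
  norm_le z := by
    rcases le_total 0 z.re with hz | hz
    · simpa [hz] using norm_mul_exp_le_of_decay_on_real hΦ.differentiable.diffContOnCl
        (fun z hz ↦ hΦ.norm_le_of_re_nonneg hz)
        (hΦ.eventually_norm_ofReal_le_of_zeros hβ hzero) hz
    · rw [norm_mul, Complex.norm_exp, Complex.re_ofReal_mul]
      refine (mul_le_of_le_one_right (norm_nonneg _) ?_).trans (hΦ.norm_le z)
      exact Real.exp_le_one_iff.2 (mul_nonpos_of_nonneg_of_nonpos (decayRate_pos hβ p).le hz)

theorem mul_exp_pow_of_zeros (hΦ : IsLaplaceType C β Φ) (hβ : β < 1)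
    (hzero : ∀ n ∈ dyadicBlocks p, Φ (n * Complex.I) = 0) (k : ℕ) :
    IsLaplaceType C β fun z ↦ Φ z * Complex.exp (decayRate β p * z) ^ k := by
  induction k with
  | zero => simpa using hΦ
  | succ k ih =>
    simpa only [mul_assoc, pow_succ] using
      ih.mul_exp_of_zeros hβ fun n hn ↦ by rw [hzero n hn, zero_mul]

theorem eq_zero_of_zeros (hΦ : IsLaplaceType C β Φ) (hβ : β < 1)
    (hzero : ∀ n ∈ dyadicBlocks p, Φ (n * Complex.I) = 0) : Φ = 0 := by
  have hright (z : ℂ) (hz : 0 < z.re) : Φ z = 0 := by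
    have hc := mul_pos (decayRate_pos hβ p) hz
    have hbound (k : ℕ) : ‖Φ z‖ ≤ C * Real.exp (-(decayRate β p * z.re)) ^ k := by
      have hk := (hΦ.mul_exp_pow_of_zeros hβ hzero k).norm_le_of_re_nonneg hz.le
      rw [norm_mul, norm_pow, Complex.norm_exp, Complex.re_ofReal_mul] at hk
      rwa [Real.exp_neg, inv_pow, ← div_eq_mul_inv, le_div_iff₀ (by positivity)]
    have hlim := (tendsto_pow_atTop_nhds_zero_of_lt_one (Real.exp_pos _).le
      (Real.exp_lt_one_iff.2 (neg_lt_zero.2 hc))).const_mul C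
    rw [mul_zero] at hlim
    exact norm_le_zero_iff.1 (ge_of_tendsto' hlim hbound)
  have hanalytic : AnalyticOnNhd ℂ Φ Set.univ :=
    hΦ.differentiable.differentiableOn.analyticOnNhd isOpen_univ
  refine hanalytic.eq_of_eventuallyEq (z₀ := 1) (fun _ _ ↦ analyticAt_const) ?_
  filter_upwards [(isOpen_lt continuous_const Complex.continuous_re).mem_nhds
    (by simp : (0 : ℝ) < (1 : ℂ).re)] with z hz using hright z hz

end IsLaplaceType

theorem differentiable_integral_mul_exp {α : Type*} [MeasurableSpace α] {μ : Measure α}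
    {f X : α → ℂ} {b : ℝ} (hf : Integrable f μ) (hX : AEStronglyMeasurable X μ)
    (hb : ∀ᵐ t ∂μ, ‖X t‖ ≤ b) :
    Differentiable ℂ fun z : ℂ ↦ ∫ t, f t * Complex.exp (z * X t) ∂μ := by
  intro z₀
  have hmeas (z : ℂ) : AEStronglyMeasurable (fun t ↦ f t * Complex.exp (z * X t)) μ :=
    hf.1.mul (Complex.continuous_exp.comp_aestronglyMeasurable (hX.const_mul z))
  have hexp {z : ℂ} {r : ℝ} (hz : ‖z‖ ≤ r) {t : α} (ht : ‖X t‖ ≤ b) :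
      ‖Complex.exp (z * X t)‖ ≤ Real.exp (r * b) := by
    rw [Complex.norm_exp]
    refine Real.exp_le_exp.2 ((Complex.re_le_norm _).trans ?_)
    rw [norm_mul]
    gcongr
    exact (norm_nonneg _).trans hz
  refine (hasDerivAt_integral_of_dominated_loc_of_deriv_le
    (F' := fun z t ↦ f t * (Complex.exp (z * X t) * X t))
    (bound := fun t ↦ ‖f t‖ * (Real.exp ((‖z₀‖ + 1) * b) * b))
    (Metric.ball_mem_nhds z₀ one_pos) (.of_forall hmeas) ?_ ?_ ?_ (hf.norm.mul_const _)
    ?_).2.differentiableAt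
  · refine (hf.norm.mul_const (Real.exp (‖z₀‖ * b))).mono' (hmeas z₀) ?_
    filter_upwards [hb] with t ht
    rw [norm_mul]
    gcongr
    exact hexp le_rfl ht
  · exact ((hmeas z₀).mul hX).congr (.of_forall fun t ↦ mul_assoc _ _ _)
  · filter_upwards [hb] with t ht z hz
    have hz' : ‖z‖ ≤ ‖z₀‖ + 1 := by
      linarith [norm_sub_norm_le z z₀, mem_ball_iff_norm.1 hz]
    rw [norm_mul, norm_mul]
    gcongr
    exact hexp hz' ht
  · refine .of_forall fun t z _ ↦ ?_
    simpa using (((hasDerivAt_id z).mul_const (X t)).cexp).const_mul (f t)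

/-- The Laplace transform of `f` restricted to `(a, b)`, in the variable `2πz` and with the origin
moved to `a` so that it is bounded on the right half-plane. -/
def laplaceOn (a b : ℝ) (f : ℝ → ℂ) (z : ℂ) : ℂ :=
  ∫ t in Set.Ioo a b, f t * Complex.exp (z * (-(2 * Real.pi * (t - a)) : ℝ))

theorem isLaplaceType_laplaceOn {a b : ℝ} {f : ℝ → ℂ}
    (hf : IntegrableOn f (Set.Ioo a b)) :
    IsLaplaceType (∫ t in Set.Ioo a b, ‖f t‖) (b - a) (laplaceOn a b f) where
  differentiable := by
    refine differentiable_integral_mul_exp (b := 2 * Real.pi * (b - a)) hf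
      (Continuous.aestronglyMeasurable (by fun_prop)) ?_
    filter_upwards [ae_restrict_mem measurableSet_Ioo] with t ht
    have : 0 ≤ t - a := sub_nonneg.2 ht.1.le
    rw [Complex.norm_real, norm_neg, Real.norm_of_nonneg (by positivity)]
    gcongr
    exact ht.2.le
  norm_le z := by
    rw [laplaceOn, ← integral_mul_const]
    refine norm_integral_le_of_norm_le (hf.norm.mul_const _) ?_
    filter_upwards [ae_restrict_mem measurableSet_Ioo] with t ht
    have hta : 0 ≤ t - a := sub_nonneg.2 ht.1.le
    rw [norm_mul, Complex.norm_exp, Complex.re_mul_ofReal]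
    refine mul_le_mul_of_nonneg_left (Real.exp_le_exp.2 ?_) (norm_nonneg _)
    calc z.re * -(2 * Real.pi * (t - a)) = 2 * Real.pi * (t - a) * -z.re := by ring
      _ ≤ 2 * Real.pi * (t - a) * max 0 (-z.re) := by gcongr; exact le_max_right _ _
      _ ≤ 2 * Real.pi * (b - a) * max 0 (-z.re) := by gcongr; exact ht.2.le

theorem laplaceOn_mul_I (a b : ℝ) (f : ℝ → ℂ) (l : ℝ) :
    laplaceOn a b f (l * Complex.I) =
      (∫ t in Set.Ioo a b, f t * expf (-l) t) * expf l a := by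
  rw [laplaceOn, ← integral_mul_const]
  congr with t
  rw [mul_assoc (f t), expf, expf, ← Complex.exp_add]
  congr 2
  push_cast
  ring

theorem integral_mul_expf_eq_zero_of_dyadicBlocks {a b : ℝ} (hab : b - a < 1) {f : ℝ → ℂ}
    (hf : IntegrableOn f (Set.Ioo a b)) {p : ℕ}
    (horth : ∀ n ∈ dyadicBlocks p, ∫ t in Set.Ioo a b, f t * expf (-n) t = 0) (l : ℝ) :
    ∫ t in Set.Ioo a b, f t * expf (-l) t = 0 := by
  have hzero : laplaceOn a b f = 0 :=
    (isLaplaceType_laplaceOn hf).eq_zero_of_zeros hab fun n hn ↦ by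
      rw [← Complex.ofReal_natCast, laplaceOn_mul_I, horth n hn, zero_mul]
  have hl := laplaceOn_mul_I a b f l
  rw [hzero, Pi.zero_apply] at hl
  exact (mul_eq_zero.1 hl.symm).resolve_right (Complex.exp_ne_zero _)

/-! ### Closed spans of exponentials -/

theorem norm_expf (l t : ℝ) : ‖expf l t‖ = 1 := by
  rw [expf, ← Complex.norm_exp_ofReal_mul_I (2 * Real.pi * l * t)]
  congr 2
  push_cast
  ring

theorem continuous_expf (l : ℝ) : Continuous (expf l) := by
  unfold expf
  fun_prop

theorem conj_expf (l t : ℝ) : (starRingEnd ℂ) (expf l t) = expf (-l) t := by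
  rw [expf, expf, ← Complex.exp_conj]
  congr 1
  simp only [map_mul, Complex.conj_ofReal, Complex.conj_I, Complex.conj_ofNat]
  push_cast
  ring

open scoped BoundedContinuousFunction
open BoundedContinuousFunction (toLp)

/-- The exponential `expf l` as a bounded continuous function, so that one and the same function
can be mapped into the `L²` spaces of all finite measures. -/
def expBCF (l : ℝ) : ℝ →ᵇ ℂ :=
  .ofNormedAddCommGroup (expf l) (continuous_expf l) 1 fun t ↦ (norm_expf l t).le

/-- Trigonometric polynomials with frequencies in `S`. -/
def trigPoly (S : Set ℝ) : Submodule ℂ (ℝ →ᵇ ℂ) :=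
  Submodule.span ℂ (expBCF '' S)

theorem trigPoly_mono {S T : Set ℝ} (h : S ⊆ T) : trigPoly S ≤ trigPoly T :=
  Submodule.span_mono (Set.image_mono h)

theorem exists_finset_mem_trigPoly {S : Set ℕ} {P : ℝ →ᵇ ℂ} (hP : P ∈ trigPoly (Nat.cast '' S)) :
    ∃ F : Finset ℕ, ↑F ⊆ S ∧ P ∈ trigPoly (Nat.cast '' (F : Set ℕ)) := by
  classical
  rw [trigPoly, Set.image_image] at hP
  obtain ⟨G, hGS, hPG⟩ := Submodule.mem_span_finite_of_mem_span hP
  obtain ⟨F, hFS, rfl⟩ := Finset.subset_set_image_iff.1 hGS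
  refine ⟨F, hFS, ?_⟩
  rwa [trigPoly, Set.image_image, ← Finset.coe_image]

/-- The closed linear span in `L²(μ)` of the exponentials with frequencies in `S`. -/
def closedExpSpan (μ : Measure ℝ) [IsFiniteMeasure μ] (S : Set ℝ) : Submodule ℂ (Lp ℂ 2 μ) :=
  ((trigPoly S).map (toLp 2 μ ℂ).toLinearMap).topologicalClosure

section ClosedExpSpan

variable {μ ν : Measure ℝ} [IsFiniteMeasure μ] [IsFiniteMeasure ν] {S : Set ℝ}

theorem integrable_norm_sq (g : ℝ →ᵇ ℂ) : Integrable (fun t ↦ ‖g t‖ ^ 2) μ :=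
  .of_bound (by fun_prop) (‖g‖ ^ 2) <| .of_forall fun t ↦ by
    rw [norm_pow, norm_norm]
    gcongr
    exact g.norm_coe_le_norm t

theorem norm_toLp_two_sq (g : ℝ →ᵇ ℂ) : ‖toLp 2 μ ℂ g‖ ^ 2 = ∫ t, ‖g t‖ ^ 2 ∂μ := by
  have hinner : inner ℂ (toLp 2 μ ℂ g) (toLp 2 μ ℂ g) = ((∫ t, ‖g t‖ ^ 2 ∂μ : ℝ) : ℂ) := by
    rw [BoundedContinuousFunction.inner_toLp, ← integral_complex_ofReal]
    simp [Complex.mul_conj, Complex.normSq_eq_norm_sq]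
  rw [inner_self_eq_norm_sq_to_K] at hinner
  exact Complex.ofReal_injective (by simpa using hinner)

theorem toLp_mem_closedExpSpan_iff {g : ℝ →ᵇ ℂ} :
    toLp 2 μ ℂ g ∈ closedExpSpan μ S ↔
      ∀ ε > 0, ∃ P ∈ trigPoly S, ∫ t, ‖(g - P) t‖ ^ 2 ∂μ < ε := by
  rw [closedExpSpan, ← SetLike.mem_coe, Submodule.topologicalClosure_coe, Metric.mem_closure_iff]
  have hdist (P : ℝ →ᵇ ℂ) :
      dist (toLp 2 μ ℂ g) (toLp 2 μ ℂ P) ^ 2 = ∫ t, ‖(g - P) t‖ ^ 2 ∂μ := by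
    rw [dist_eq_norm, ← map_sub, norm_toLp_two_sq]
  constructor
  · intro h ε hε
    obtain ⟨_, ⟨P, hP, rfl⟩, hlt⟩ := h (√ε) (Real.sqrt_pos.2 hε)
    exact ⟨P, hP, (hdist P).symm.trans_lt ((Real.lt_sqrt dist_nonneg).1 hlt)⟩
  · intro h ε hε
    obtain ⟨P, hP, hlt⟩ := h (ε ^ 2) (pow_pos hε 2)
    exact ⟨_, ⟨P, hP, rfl⟩, lt_of_pow_lt_pow_left₀ 2 hε.le ((hdist P).trans_lt hlt)⟩

theorem toLp_expBCF_mem_closedExpSpan {l : ℝ} (hl : l ∈ S) :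
    toLp 2 μ ℂ (expBCF l) ∈ closedExpSpan μ S :=
  Submodule.le_topologicalClosure _ ⟨_, Submodule.subset_span ⟨l, hl, rfl⟩, rfl⟩

theorem closedExpSpan_le {K : Submodule ℂ (Lp ℂ 2 μ)} (hK : IsClosed (K : Set (Lp ℂ 2 μ)))
    (h : ∀ l ∈ S, toLp 2 μ ℂ (expBCF l) ∈ K) : closedExpSpan μ S ≤ K := by
  refine Submodule.topologicalClosure_minimal _ ?_ hK
  rw [Submodule.map_le_iff_le_comap, trigPoly, Submodule.span_le]
  rintro _ ⟨l, hl, rfl⟩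
  exact h l hl

theorem inner_toLp_expBCF (l : ℝ) (f : Lp ℂ 2 μ) :
    inner ℂ (toLp 2 μ ℂ (expBCF l)) f = ∫ t, f t * expf (-l) t ∂μ := by
  rw [L2.inner_def]
  refine integral_congr_ae ?_
  filter_upwards [BoundedContinuousFunction.coeFn_toLp 2 μ ℂ (expBCF l)] with t ht
  rw [ht, RCLike.inner_apply, ← conj_expf]
  rfl

theorem mem_orthogonal_closedExpSpan_iff {f : Lp ℂ 2 μ} :
    f ∈ (closedExpSpan μ S)ᗮ ↔ ∀ l ∈ S, ∫ t, f t * expf (-l) t ∂μ = 0 := by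
  simp only [← inner_toLp_expBCF]
  refine ⟨fun hf l hl ↦ hf _ (toLp_expBCF_mem_closedExpSpan hl), fun hf g hg ↦ ?_⟩
  have hle : closedExpSpan μ S ≤ (ℂ ∙ f)ᗮ :=
    closedExpSpan_le (Submodule.isClosed_orthogonal _) fun l hl ↦
      Submodule.mem_orthogonal_singleton_iff_inner_left.2 (hf l hl)
  exact Submodule.mem_orthogonal_singleton_iff_inner_left.1 (hle hg)

theorem closedExpSpan_eq_top_of_le (hμν : μ ≤ ν) (h : closedExpSpan ν S = ⊤) :
    closedExpSpan μ S = ⊤ := by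
  have hmem (g : ℝ →ᵇ ℂ) : toLp 2 μ ℂ g ∈ closedExpSpan μ S := by
    refine toLp_mem_closedExpSpan_iff.2 fun ε hε ↦ ?_
    have hg : toLp 2 ν ℂ g ∈ closedExpSpan ν S := h ▸ Submodule.mem_top
    obtain ⟨P, hP, hlt⟩ := toLp_mem_closedExpSpan_iff.1 hg ε hε
    exact ⟨P, hP, (integral_mono_measure hμν (.of_forall fun t ↦ by positivity)
      (integrable_norm_sq (g - P))).trans_lt hlt⟩
  have hdense : DenseRange (toLp 2 μ ℂ : (ℝ →ᵇ ℂ) →L[ℂ] Lp ℂ 2 μ) :=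
    BoundedContinuousFunction.toLp_denseRange ℂ μ ℂ ENNReal.ofNat_ne_top
  refine SetLike.coe_injective (Set.eq_univ_of_univ_subset ?_)
  rw [← hdense.closure_range]
  exact closure_minimal (Set.range_subset_iff.2 hmem) (Submodule.isClosed_topologicalClosure _)

theorem expSpans_of_closedExpSpan_eq_top {w : ℝ → ℝ} [IsFiniteMeasure (wMeasure w)]
    (h : closedExpSpan (wMeasure w) S = ⊤) : ExpSpans w S := by
  rw [ExpSpans, ← Submodule.topologicalClosure_coe, ← Submodule.top_coe (R := ℂ), ← h,
    SetLike.coe_set_eq]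
  refine (h ▸ le_top).antisymm (closedExpSpan_le (Submodule.isClosed_topologicalClosure _)
    fun l hl ↦ Submodule.le_topologicalClosure _ (Submodule.subset_span ⟨l, hl, ?_⟩))
  exact BoundedContinuousFunction.coeFn_toLp 2 _ ℂ (expBCF l)

end ClosedExpSpan

section Duality

variable {μ : Measure ℝ} [IsFiniteMeasure μ] {S T : Set ℝ}

theorem orthogonal_orthogonal_closedExpSpan :
    (closedExpSpan μ S)ᗮᗮ = closedExpSpan μ S := by
  rw [Submodule.orthogonal_orthogonal_eq_closure]
  exact (Submodule.isClosed_topologicalClosure _).submodule_topologicalClosure_eq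

theorem closedExpSpan_le_closedExpSpan
    (h : ∀ f : Lp ℂ 2 μ, (∀ l ∈ T, ∫ t, f t * expf (-l) t ∂μ = 0) →
      ∀ l ∈ S, ∫ t, f t * expf (-l) t ∂μ = 0) :
    closedExpSpan μ S ≤ closedExpSpan μ T := by
  rw [← orthogonal_orthogonal_closedExpSpan (S := S),
    ← orthogonal_orthogonal_closedExpSpan (S := T)]
  exact Submodule.orthogonal_le fun f hf ↦
    mem_orthogonal_closedExpSpan_iff.2 (h f (mem_orthogonal_closedExpSpan_iff.1 hf))

theorem closedExpSpan_eq_top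
    (h : ∀ f : Lp ℂ 2 μ, (∀ l ∈ S, ∫ t, f t * expf (-l) t ∂μ = 0) → f = 0) :
    closedExpSpan μ S = ⊤ := by
  have hbot : (closedExpSpan μ S)ᗮ = ⊥ :=
    (Submodule.eq_bot_iff _).2 fun f hf ↦ h f (mem_orthogonal_closedExpSpan_iff.1 hf)
  rw [← orthogonal_orthogonal_closedExpSpan, hbot, Submodule.bot_orthogonal_eq_top]

end Duality

theorem closedExpSpan_Ioo_range_intCast :
    closedExpSpan (volume.restrict (Set.Ioo 0 1)) (Set.range ((↑) : ℤ → ℝ)) = ⊤ := by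
  refine closedExpSpan_eq_top fun f hf ↦ ?_
  have hcoeff (i : ℤ) : fourierCoeffOn (zero_lt_one' ℝ) f i = 0 := by
    rw [fourierCoeffOn_eq_integral, intervalIntegral.integral_of_le zero_le_one,
      integral_Ioc_eq_integral_Ioo, ← hf i ⟨i, rfl⟩, sub_zero, div_one, one_smul]
    congr with t
    rw [fourier_coe_apply, smul_eq_mul, mul_comm, expf]
    simp
  have hf2 : MemLp f 2 (volume.restrict (Set.Ioc 0 1)) := by
    rw [← Measure.restrict_congr_set Ioo_ae_eq_Ioc]
    exact Lp.memLp f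
  have hparseval := tsum_sq_fourierCoeffOn (zero_lt_one' ℝ) hf2
  simp only [hcoeff, norm_zero, ne_eq, OfNat.ofNat_ne_zero, not_false_eq_true, zero_pow, tsum_zero,
    intervalIntegral.integral_of_le zero_le_one, integral_Ioc_eq_integral_Ioo, sub_zero, inv_one,
    one_smul] at hparseval
  rw [eq_comm, integral_eq_zero_iff_of_nonneg (fun t ↦ by positivity)
    ((memLp_two_iff_integrable_sq_norm (Lp.aestronglyMeasurable f)).1 (Lp.memLp f))] at hparseval
  rw [Lp.eq_zero_iff_ae_eq_zero]
  filter_upwards [hparseval] with t ht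
  simpa using ht

theorem closedExpSpan_le_closedExpSpan_dyadicBlocks {a b : ℝ} (hab : b - a < 1) (p : ℕ)
    (S : Set ℝ) :
    closedExpSpan (volume.restrict (Set.Ioo a b)) S ≤
      closedExpSpan (volume.restrict (Set.Ioo a b)) (Nat.cast '' dyadicBlocks p) :=
  closedExpSpan_le_closedExpSpan fun f hf l _ ↦
    integral_mul_expf_eq_zero_of_dyadicBlocks hab ((Lp.memLp f).integrable one_le_two)
      (fun n hn ↦ hf n ⟨n, hn, rfl⟩) l

theorem exists_finset_dyadicBlocks_approx {a b : ℝ} (hab : b - a < 1) (p : ℕ) (l : ℝ) {ε : ℝ}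
    (hε : 0 < ε) :
    ∃ F : Finset ℕ, ↑F ⊆ dyadicBlocks p ∧ ∃ P ∈ trigPoly (Nat.cast '' (F : Set ℕ)),
      ∫ t in Set.Ioo a b, ‖(expBCF l - P) t‖ ^ 2 < ε := by
  have hl : toLp 2 (volume.restrict (Set.Ioo a b)) ℂ (expBCF l) ∈
      closedExpSpan _ (Nat.cast '' dyadicBlocks p) :=
    closedExpSpan_le_closedExpSpan_dyadicBlocks hab p {l} (toLp_expBCF_mem_closedExpSpan rfl)
  obtain ⟨P, hP, hlt⟩ := toLp_mem_closedExpSpan_iff.1 hl ε hε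
  obtain ⟨F, hF, hPF⟩ := exists_finset_mem_trigPoly hP
  exact ⟨F, hF, P, hPF, hlt⟩

/-! ### Rapidly decaying weights -/

theorem exists_antitone_pos_le {δ : ℕ → ℝ} (hδ : ∀ j, 0 < δ j) :
    ∃ D : ℕ → ℝ, Antitone D ∧ (∀ n, 0 < D n) ∧ (∀ n, D n ≤ 1) ∧ ∀ ⦃j n⦄, j < n → D n ≤ δ j := by
  have hfactor (j : ℕ) : 0 < min 1 (δ j) := lt_min one_pos (hδ j)
  have hpos (n : ℕ) : 0 < ∏ j ∈ Finset.range n, min 1 (δ j) := Finset.prod_pos fun j _ ↦ hfactor j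
  have hanti : Antitone fun n ↦ ∏ j ∈ Finset.range n, min 1 (δ j) :=
    antitone_nat_of_succ_le fun n ↦ by
      rw [Finset.prod_range_succ]
      exact mul_le_of_le_one_right (hpos n).le (min_le_left _ _)
  have hle (n : ℕ) : ∏ j ∈ Finset.range n, min 1 (δ j) ≤ 1 :=
    Finset.prod_le_one (fun j _ ↦ (hfactor j).le) fun j _ ↦ min_le_left _ _
  refine ⟨_, hanti, hpos, hle, fun j n hjn ↦ (hanti (Nat.succ_le_of_lt hjn)).trans ?_⟩
  simp only [Finset.prod_range_succ]
  exact (mul_le_of_le_one_left (hfactor j).le (hle j)).trans (min_le_right _ _)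

theorem logIntNegInf_of_le_exp_neg_inv {w : ℝ → ℝ} (hpos : ∀ t ∈ Set.Ioo (0 : ℝ) 1, 0 < w t)
    (hle : ∀ t ∈ Set.Ioo (0 : ℝ) 1, w t ≤ Real.exp (-t⁻¹)) : LogIntNegInf w := by
  have hlog : ∀ t ∈ Set.Ioo (0 : ℝ) 1, Real.log (w t) ≤ -t⁻¹ := fun t ht ↦
    (Real.log_le_iff_le_exp (hpos t ht)).2 (hle t ht)
  constructor
  · have hzero : Set.EqOn (fun t ↦ ENNReal.ofReal (Real.log (w t))) 0 (Set.Ioo 0 1) := fun t ht ↦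
      ENNReal.ofReal_of_nonpos <| (hlog t ht).trans (neg_nonpos.2 (inv_pos.2 ht.1).le)
    rw [setLIntegral_congr_fun measurableSet_Ioo hzero]
    simp
  · by_contra hfin
    have hinv : ∫⁻ t in Set.Ioo (0 : ℝ) 1, ENNReal.ofReal t⁻¹ ≠ ⊤ :=
      ne_top_of_le_ne_top hfin <| setLIntegral_mono' measurableSet_Ioo fun t ht ↦
        ENNReal.ofReal_le_ofReal (le_neg_of_le_neg (hlog t ht))
    have hnonneg : 0 ≤ᵐ[volume.restrict (Set.Ioo (0 : ℝ) 1)] fun t ↦ t⁻¹ := by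
      filter_upwards [ae_restrict_mem measurableSet_Ioo] with t ht using (inv_pos.2 ht.1).le
    have hint : IntervalIntegrable (fun t : ℝ ↦ t⁻¹) volume 0 1 :=
      (intervalIntegrable_iff_integrableOn_Ioo_of_le zero_le_one).2 <|
        (lintegral_ofReal_ne_top_iff_integrable (by fun_prop) hnonneg).1 hinv
    simp [intervalIntegrable_inv_iff] at hint

theorem exists_weight {δ : ℕ → ℝ} (hδ : ∀ j, 0 < δ j) :
    ∃ w : ℝ → ℝ, (∀ t ∈ Set.Ioo (0 : ℝ) 1, 0 < w t) ∧ (∀ t ∈ Set.Ioo (0 : ℝ) 1, w t ≤ 1) ∧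
      MonotoneOn w (Set.Ioo 0 1) ∧ LogIntNegInf w ∧
      ∀ j : ℕ, ∀ t ∈ Set.Ioo (0 : ℝ) 1, t ≤ 1 / (j + 2) → w t ≤ δ j := by
  obtain ⟨D, hanti, hDpos, hDle, hDδ⟩ := exists_antitone_pos_le hδ
  have hpos (t : ℝ) : 0 < Real.exp (-t⁻¹) * D ⌊t⁻¹⌋₊ := mul_pos (Real.exp_pos _) (hDpos _)
  have hexp : ∀ t ∈ Set.Ioo (0 : ℝ) 1, Real.exp (-t⁻¹) ≤ 1 := fun t ht ↦
    Real.exp_le_one_iff.2 (neg_nonpos.2 (inv_pos.2 ht.1).le)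
  have hle (t : ℝ) : Real.exp (-t⁻¹) * D ⌊t⁻¹⌋₊ ≤ Real.exp (-t⁻¹) :=
    mul_le_of_le_one_right (Real.exp_pos _).le (hDle _)
  refine ⟨fun t ↦ Real.exp (-t⁻¹) * D ⌊t⁻¹⌋₊, fun t _ ↦ hpos t,
    fun t ht ↦ (hle t).trans (hexp t ht), fun s hs t _ hst ↦ ?_,
    logIntNegInf_of_le_exp_neg_inv (fun t _ ↦ hpos t) fun t _ ↦ hle t, fun j t ht htj ↦ ?_⟩
  · have hinv : t⁻¹ ≤ s⁻¹ := inv_anti₀ hs.1 hst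
    exact mul_le_mul (Real.exp_le_exp.2 (neg_le_neg hinv)) (hanti (Nat.floor_mono hinv))
      (hDpos _).le (Real.exp_pos _).le
  · have hfloor : j + 2 ≤ ⌊t⁻¹⌋₊ := by
      refine Nat.le_floor ?_
      push_cast
      rwa [le_inv_comm₀ (by positivity) ht.1, ← one_div]
    exact (mul_le_of_le_one_left (hDpos _).le (hexp t ht)).trans (hDδ (by lia))

section WMeasure

variable {w : ℝ → ℝ} {a δ : ℝ}

theorem wMeasure_le (hle : ∀ t ∈ Set.Ioo (0 : ℝ) 1, w t ≤ 1) :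
    wMeasure w ≤ volume.restrict (Set.Ioo 0 1) := by
  refine (withDensity_mono (g := 1) ?_).trans_eq withDensity_one
  filter_upwards [ae_restrict_mem measurableSet_Ioo] with t ht
  simpa using hle t ht

theorem wMeasure_le_add (ha : 0 ≤ a) (hle : ∀ t ∈ Set.Ioo (0 : ℝ) 1, w t ≤ 1)
    (hδ : ∀ t ∈ Set.Ioo (0 : ℝ) 1, t ≤ a → w t ≤ δ) :
    wMeasure w ≤
      volume.restrict (Set.Ioo a 1) + ENNReal.ofReal δ • volume.restrict (Set.Ioo 0 1) := by
  calc wMeasure w ≤ (volume.restrict (Set.Ioo (0 : ℝ) 1)).withDensity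
        ((Set.Ioo a 1).indicator 1 + fun _ ↦ ENNReal.ofReal δ) := by
        refine withDensity_mono ?_
        filter_upwards [ae_restrict_mem measurableSet_Ioo] with t ht
        rcases le_or_gt t a with hta | hta
        · exact (ENNReal.ofReal_le_ofReal (hδ t ht hta)).trans le_add_self
        · have hmem : t ∈ Set.Ioo a 1 := ⟨hta, ht.2⟩
          rw [Pi.add_apply, Set.indicator_of_mem hmem]
          exact (ENNReal.ofReal_le_one.2 (hle t ht)).trans le_self_add
    _ = _ := by
        rw [withDensity_add_left (measurable_one.indicator measurableSet_Ioo),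
          withDensity_indicator_one measurableSet_Ioo, withDensity_const,
          Measure.restrict_restrict measurableSet_Ioo,
          Set.inter_eq_left.2 (Set.Ioo_subset_Ioo_left ha)]

theorem integral_norm_sq_wMeasure_le (ha : 0 ≤ a) (hδ0 : 0 ≤ δ)
    (hle : ∀ t ∈ Set.Ioo (0 : ℝ) 1, w t ≤ 1) (hδ : ∀ t ∈ Set.Ioo (0 : ℝ) 1, t ≤ a → w t ≤ δ)
    (g : ℝ →ᵇ ℂ) :
    ∫ t, ‖g t‖ ^ 2 ∂wMeasure w ≤ (∫ t in Set.Ioo a 1, ‖g t‖ ^ 2) + δ * ‖g‖ ^ 2 := by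
  have hsmul : Integrable (fun t ↦ ‖g t‖ ^ 2)
      (ENNReal.ofReal δ • volume.restrict (Set.Ioo (0 : ℝ) 1)) :=
    (integrable_norm_sq g).smul_measure ENNReal.ofReal_ne_top
  have hsup : ∫ t in Set.Ioo (0 : ℝ) 1, ‖g t‖ ^ 2 ≤ ‖g‖ ^ 2 := by
    calc ∫ t in Set.Ioo (0 : ℝ) 1, ‖g t‖ ^ 2 ≤ ∫ _ in Set.Ioo (0 : ℝ) 1, ‖g‖ ^ 2 := by
          refine integral_mono (integrable_norm_sq g) (integrable_const _) fun t ↦ ?_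
          gcongr
          exact g.norm_coe_le_norm t
      _ = ‖g‖ ^ 2 := by simp
  calc ∫ t, ‖g t‖ ^ 2 ∂wMeasure w
      ≤ ∫ t, ‖g t‖ ^ 2
          ∂(volume.restrict (Set.Ioo a 1) + ENNReal.ofReal δ • volume.restrict (Set.Ioo 0 1)) :=
        integral_mono_measure (wMeasure_le_add ha hle hδ) (.of_forall fun t ↦ by positivity)
          ((integrable_norm_sq g).add_measure hsmul)
    _ = (∫ t in Set.Ioo a 1, ‖g t‖ ^ 2) + δ * ∫ t in Set.Ioo (0 : ℝ) 1, ‖g t‖ ^ 2 := by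
        rw [integral_add_measure (integrable_norm_sq g) hsmul, integral_smul_measure,
          ENNReal.toReal_ofReal hδ0, smul_eq_mul]
    _ ≤ _ := by gcongr

end WMeasure

theorem exists_weight_tendsto {g : ℕ → ℝ →ᵇ ℂ}
    (hg : Tendsto (fun j : ℕ ↦ ∫ t in Set.Ioo (1 / (j + 2) : ℝ) 1, ‖g j t‖ ^ 2) atTop (nhds 0)) :
    ∃ w : ℝ → ℝ, (∀ t ∈ Set.Ioo (0 : ℝ) 1, 0 < w t) ∧ (∀ t ∈ Set.Ioo (0 : ℝ) 1, w t ≤ 1) ∧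
      MonotoneOn w (Set.Ioo 0 1) ∧ LogIntNegInf w ∧
      Tendsto (fun j ↦ ∫ t, ‖g j t‖ ^ 2 ∂wMeasure w) atTop (nhds 0) := by
  obtain ⟨w, hpos, hle, hmono, hlog, hwδ⟩ :=
    exists_weight (δ := fun j ↦ 1 / (j + 1) / (1 + ‖g j‖ ^ 2)) fun j ↦ by positivity
  refine ⟨w, hpos, hle, hmono, hlog, squeeze_zero (fun j ↦ integral_nonneg fun t ↦ by positivity)
    (fun j ↦ ?_) (by simpa only [add_zero] using hg.add tendsto_one_div_add_atTop_nhds_zero_nat)⟩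
  refine (integral_norm_sq_wMeasure_le (by positivity) (by positivity) hle (hwδ j) (g j)).trans
    (add_le_add le_rfl ?_)
  rw [div_mul_comm]
  exact mul_le_of_le_one_left (by positivity) (div_le_one_of_le₀ (by linarith) (by positivity))

theorem exists_seq_frequently_eq (α : Type*) [Countable α] [Nonempty α] :
    ∃ u : ℕ → α, ∀ a, ∃ᶠ n in atTop, u n = a := by
  obtain ⟨v, hv⟩ := exists_surjective_nat α
  refine ⟨fun n ↦ v n.unpair.1, fun a ↦ frequently_atTop.2 fun N ↦ ?_⟩
  obtain ⟨m, rfl⟩ := hv a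
  exact ⟨m.pair N, Nat.right_le_pair m N, by simp⟩

/-! ### Density of the spectrum -/

theorem dyadicBlocks_antitone : Antitone dyadicBlocks := by
  intro p q hpq
  refine Set.iUnion_subset fun l ↦ Set.subset_iUnion_of_subset (q - p + l) ?_
  rw [← add_assoc, Nat.add_sub_cancel' hpq]
  refine Set.Ico_subset_Ico_right (Nat.add_le_add_left (Nat.pow_le_pow_right two_pos ?_) _)
  exact Nat.le_add_left l _

theorem one_le_of_mem_dyadicBlocks {p n : ℕ} (hn : n ∈ dyadicBlocks p) : 1 ≤ n := by
  obtain ⟨l, hl⟩ := Set.mem_iUnion.1 hn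
  exact Nat.one_le_two_pow.trans hl.1

theorem two_pow_mul_ncard_dyadicBlocks_inter_Icc_le (p n : ℕ) :
    2 ^ p * (dyadicBlocks p ∩ Set.Icc 1 n).ncard ≤ 2 * n := by
  rcases eq_or_ne n 0 with rfl | hn
  · simp
  have hsub : dyadicBlocks p ∩ Set.Icc 1 n ⊆ (Finset.range (Nat.log 2 n + 1 - p)).biUnion
      fun l ↦ Finset.Ico (2 ^ (p + l)) (2 ^ (p + l) + 2 ^ l) := by
    rintro m ⟨hm, -, hmn⟩
    obtain ⟨l, hl⟩ := Set.mem_iUnion.1 hm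
    have hlog : p + l ≤ Nat.log 2 n := Nat.le_log_of_pow_le one_lt_two (hl.1.trans hmn)
    exact Finset.mem_biUnion.2 ⟨l, Finset.mem_range.2 (by lia), Finset.mem_Ico.2 hl⟩
  have hcard : (dyadicBlocks p ∩ Set.Icc 1 n).ncard ≤
      ∑ l ∈ Finset.range (Nat.log 2 n + 1 - p), 2 ^ l := by
    refine (Set.ncard_le_ncard hsub (Finset.finite_toSet _)).trans ?_
    rw [Set.ncard_coe_finset]
    exact Finset.card_biUnion_le.trans (by simp)
  calc 2 ^ p * (dyadicBlocks p ∩ Set.Icc 1 n).ncard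
      ≤ 2 ^ p * ∑ l ∈ Finset.range (Nat.log 2 n + 1 - p), 2 ^ l := by gcongr
    _ = ∑ k ∈ Finset.Ico p (Nat.log 2 n + 1), 2 ^ k := by
        simp only [Finset.sum_Ico_eq_sum_range, Finset.mul_sum, pow_add]
    _ ≤ 2 ^ (Nat.log 2 n + 1) := (Nat.geomSum_lt le_rfl fun k hk ↦ (Finset.mem_Ico.1 hk).2).le
    _ ≤ 2 * n := by
        rw [pow_succ']
        gcongr
        exact Nat.pow_log_le_self 2 hn

section Density

variable {T : Set ℕ}

theorem ncard_inter_Icc_div_le {p : ℕ} (hT : (T \ dyadicBlocks p).Finite) (n : ℕ) :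
    ((T ∩ Set.Icc 1 n).ncard : ℝ) / n ≤ (T \ dyadicBlocks p).ncard / n + 2 / 2 ^ p := by
  have hsub : T ∩ Set.Icc 1 n ⊆ T \ dyadicBlocks p ∪ dyadicBlocks p ∩ Set.Icc 1 n := by
    intro m hm
    by_cases h : m ∈ dyadicBlocks p
    exacts [.inr ⟨h, hm.2⟩, .inl ⟨hm.1, h⟩]
  have hcard : (T ∩ Set.Icc 1 n).ncard ≤
      (T \ dyadicBlocks p).ncard + (dyadicBlocks p ∩ Set.Icc 1 n).ncard :=
    (Set.ncard_le_ncard hsub (hT.union ((Set.finite_Icc 1 n).inter_of_right _))).trans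
      (Set.ncard_union_le _ _)
  have hblocks : ((dyadicBlocks p ∩ Set.Icc 1 n).ncard : ℝ) ≤ 2 / 2 ^ p * n := by
    rw [div_mul_eq_mul_div, le_div_iff₀' (by positivity)]
    exact_mod_cast two_pow_mul_ncard_dyadicBlocks_inter_Icc_le p n
  calc ((T ∩ Set.Icc 1 n).ncard : ℝ) / n
      ≤ ((T \ dyadicBlocks p).ncard + (dyadicBlocks p ∩ Set.Icc 1 n).ncard) / n := by
        gcongr
        exact_mod_cast hcard
    _ = (T \ dyadicBlocks p).ncard / n + (dyadicBlocks p ∩ Set.Icc 1 n).ncard / n := add_div ..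
    _ ≤ _ := add_le_add le_rfl (div_le_of_le_mul₀ (by positivity) (by positivity) hblocks)

theorem tendsto_ncard_inter_Icc_div_zero (hT : ∀ p, (T \ dyadicBlocks p).Finite) :
    Tendsto (fun n : ℕ ↦ ((T ∩ Set.Icc 1 n).ncard : ℝ) / n) atTop (nhds 0) := by
  refine tendsto_order.2 ⟨fun c hc ↦ .of_forall fun n ↦ hc.trans_le (by positivity), fun ε hε ↦ ?_⟩
  obtain ⟨p, hp⟩ := pow_unbounded_of_one_lt (2 / ε) (one_lt_two : (1 : ℝ) < 2)
  have hlim : Tendsto (fun n : ℕ ↦ ((T \ dyadicBlocks p).ncard / n + 2 / 2 ^ p : ℝ)) atTop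
      (nhds (0 + 2 / 2 ^ p)) := (tendsto_const_div_atTop_nhds_zero_nat _).add_const _
  have hpε : 0 + 2 / 2 ^ p < ε := by rwa [zero_add, div_lt_comm₀ (by positivity) hε]
  filter_upwards [hlim.eventually_lt_const hpε] with n hn
  exact (ncard_inter_Icc_div_le (hT p) n).trans_lt hn

theorem ncard_compl_inter_Icc_add (n : ℕ) :
    ({m | 1 ≤ m ∧ m ∉ T} ∩ Set.Icc 1 n).ncard + (T ∩ Set.Icc 1 n).ncard = n := by
  have hdiff : {m | 1 ≤ m ∧ m ∉ T} ∩ Set.Icc 1 n = Set.Icc 1 n \ (T ∩ Set.Icc 1 n) := by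
    ext m
    simp only [Set.mem_inter_iff, Set.mem_ofPred_eq, Set.mem_Icc, Set.mem_sdiff]
    tauto
  rw [hdiff, Set.ncard_sdiff_add_ncard_of_subset Set.inter_subset_right (Set.finite_Icc 1 n),
    ← Finset.coe_Icc, Set.ncard_coe_finset, Nat.card_Icc, Nat.add_sub_cancel]

theorem liminf_ncard_compl_inter_Icc_div (hT : ∀ p, (T \ dyadicBlocks p).Finite) :
    atTop.liminf (fun n : ℕ ↦ (({m | 1 ≤ m ∧ m ∉ T} ∩ Set.Icc 1 n).ncard : ℝ) / n) = 1 := by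
  refine Tendsto.liminf_eq ?_
  have hlim := (tendsto_ncard_inter_Icc_div_zero hT).const_sub 1
  rw [sub_zero] at hlim
  refine hlim.congr' ?_
  filter_upwards [eventually_ne_atTop 0] with n hn
  rw [sub_eq_iff_eq_add, ← add_div, ← Nat.cast_add, ncard_compl_inter_Icc_add,
    div_self (Nat.cast_ne_zero.2 hn)]

end Density

theorem closedExpSpan_eq_top_of_tendsto {μ : Measure ℝ} [IsFiniteMeasure μ]
    (hμ : μ ≤ volume.restrict (Set.Ioo 0 1)) {S : Set ℝ} {u : ℕ → ℤ}
    (hu : ∀ i, ∃ᶠ j in atTop, u j = i) {P : ℕ → ℝ →ᵇ ℂ} (hP : ∀ j, P j ∈ trigPoly S)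
    (hlim : Tendsto (fun j ↦ ∫ t, ‖(expBCF (u j) - P j) t‖ ^ 2 ∂μ) atTop (nhds 0)) :
    closedExpSpan μ S = ⊤ := by
  rw [eq_top_iff, ← closedExpSpan_eq_top_of_le hμ closedExpSpan_Ioo_range_intCast]
  refine closedExpSpan_le (Submodule.isClosed_topologicalClosure _) ?_
  rintro _ ⟨i, rfl⟩
  refine toLp_mem_closedExpSpan_iff.2 fun ε hε ↦ ?_
  obtain ⟨j, rfl, hlt⟩ := ((hu i).and_eventually (hlim.eventually_lt_const hε)).exists
  exact ⟨P j, hP j, hlt⟩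

theorem finite_iUnion_sdiff_dyadicBlocks {F : ℕ → Finset ℕ} (hF : ∀ j, ↑(F j) ⊆ dyadicBlocks j)
    (p : ℕ) : ((⋃ j, (F j : Set ℕ)) \ dyadicBlocks p).Finite := by
  refine ((Finset.range p).biUnion F).finite_toSet.subset fun n ⟨hn, hnp⟩ ↦ ?_
  obtain ⟨j, hj⟩ := Set.mem_iUnion.1 hn
  have hjp : j < p := not_le.1 fun hpj ↦ hnp (dyadicBlocks_antitone hpj (hF j hj))
  exact Finset.mem_biUnion.2 ⟨j, Finset.mem_range.2 hjp, hj⟩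

theorem setOf_natCast_notMem_eq_image {T : Set ℕ} (hT : ∀ n ∈ T, 1 ≤ n) :
    {x : ℝ | ∃ n : ℕ, 1 ≤ n ∧ n ∉ {m | 1 ≤ m ∧ m ∉ T} ∧ x = n} = Nat.cast '' T := by
  ext x
  constructor
  · rintro ⟨n, hn, hnT, rfl⟩
    exact ⟨n, by_contra fun h ↦ hnT ⟨hn, h⟩, rfl⟩
  · rintro ⟨n, hnT, rfl⟩
    exact ⟨n, hT n hnT, fun h ↦ h.2 hnT, rfl⟩

/-- **Proposition 1.** There is a set `Γ ⊆ ℕ` of lower density one such that `E(ℕ∖Γ)` is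
complete in `L²(𝕋,w)` for some positive increasing weight `w` with `∫₀¹ log w = -∞`. -/
theorem exists_density_one_removable :
    ∃ Γ : Set ℕ, 0 ∉ Γ ∧
      Filter.atTop.liminf (fun n : ℕ => ((Γ ∩ Set.Icc 1 n).ncard : ℝ) / n) = 1 ∧
      ∃ w : ℝ → ℝ, (∀ t ∈ Set.Ioo (0:ℝ) 1, 0 < w t) ∧
        MonotoneOn w (Set.Ioo (0:ℝ) 1) ∧ LogIntNegInf w ∧
        ExpSpans w {x : ℝ | ∃ n : ℕ, 1 ≤ n ∧ n ∉ Γ ∧ x = n} := by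
  obtain ⟨u, hu⟩ := exists_seq_frequently_eq ℤ
  choose F hF P hP hlt using fun j : ℕ ↦ exists_finset_dyadicBlocks_approx (a := 1 / (j + 2))
    (b := 1) (sub_lt_self 1 (by positivity)) j (u j) (Nat.one_div_pos_of_nat (n := j))
  obtain ⟨w, hpos, hle, hmono, hlog, hlim⟩ := exists_weight_tendsto <|
    squeeze_zero (fun j ↦ integral_nonneg fun t ↦ by positivity) (fun j ↦ (hlt j).le)
      tendsto_one_div_add_atTop_nhds_zero_nat
  set T : Set ℕ := ⋃ j, F j
  have hT : ∀ n ∈ T, 1 ≤ n := fun n hn ↦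
    (Set.mem_iUnion.1 hn).elim fun j hj ↦ one_le_of_mem_dyadicBlocks (hF j hj)
  have := isFiniteMeasure_of_le _ (wMeasure_le hle)
  have hcomplete : closedExpSpan (wMeasure w) (Nat.cast '' T) = ⊤ :=
    closedExpSpan_eq_top_of_tendsto (wMeasure_le hle) hu
      (fun j ↦ trigPoly_mono (Set.image_mono (Set.subset_iUnion _ j)) (hP j)) hlim
  refine ⟨{m | 1 ≤ m ∧ m ∉ T}, fun h ↦ absurd h.1 (by simp),
    liminf_ncard_compl_inter_Icc_div (finite_iUnion_sdiff_dyadicBlocks hF), w, hpos, hmono, hlog,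
    ?_⟩
  rw [setOf_natCast_notMem_eq_image hT]
  exact expSpans_of_closedExpSpan_eq_top hcomplete
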